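/- arXiv:1703.02022 — 3 statements merged into one kernel-verified Lean document; each statement's English description precedes it below -/
import Mathlib

section
/- Fix κ ∈ (0,8) and ν > max(−4, κ/2 − 6), and set F(z) = ₂F₁((2ν+4)/κ, 1 − 4/κ, (2ν+8)/κ; z). Then F is monotone on [0,1], and in particular for all z ∈ [0,1] one has 0 < min(1, F(1)) ≤ F(z) ≤ max(1, F(1)) < ∞. -/
open Polynomial Set Filter

/-- Term of the Gauss hypergeometric series: ((A)_n (B)_n / (C)_n) z^n / n!. -/
noncomputable def hypTerm (A B C z : ℝ) (n : ℕ) : ℝ :=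
  ((ascPochhammer ℝ n).eval A * (ascPochhammer ℝ n).eval B /
    (ascPochhammer ℝ n).eval C) * z ^ n / n.factorial

/-- The Gauss hypergeometric function ₂F₁(A,B,C;z), as the sum of its series. -/
noncomputable def hyp2F1 (A B C z : ℝ) : ℝ := ∑' n : ℕ, hypTerm A B C z n

lemma hyp_term_eq (a b c z : ℝ) (n : ℕ) : hypTerm a b c z n = hypTerm a b c 1 n * z ^ n := by
  unfold hypTerm; simp; ring

lemma hyp_poch_pos {c : ℝ} (hc : 0 < c) (n : ℕ) : 0 < (ascPochhammer ℝ n).eval c :=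
  ascPochhammer_pos n c hc

lemma hyp_term_zero (a b c z : ℝ) : hypTerm a b c z 0 = 1 := by
  simp [hypTerm]

lemma hyp_term_succ (a b : ℝ) {c : ℝ} (hc : 0 < c) (n : ℕ) :
    (n + 1 : ℝ) * hypTerm a b c 1 (n + 1) = hypTerm a b c 1 n * ((a + n) * (b + n) / (c + n)) := by
  have h1 := (hyp_poch_pos hc n).ne'
  have h2 : (c + n) ≠ 0 := by positivity
  have h3 : (n.factorial : ℝ) ≠ 0 := by positivity
  unfold hypTerm
  simp only [ascPochhammer_succ_eval, Nat.factorial_succ, one_pow]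
  push_cast
  field_simp

lemma hyp_poch_shift (x : ℝ) (n : ℕ) : (ascPochhammer ℝ (n + 1)).eval x =
    x * (ascPochhammer ℝ n).eval (x + 1) := by
  rw [ascPochhammer_succ_left]; simp [eval_comp]

lemma hyp_term_deriv (a b : ℝ) {c : ℝ} (hc : 0 < c) (n : ℕ) :
    (n + 1 : ℝ) * hypTerm a b c 1 (n + 1) = a * b / c * hypTerm (a + 1) (b + 1) (c + 1) 1 n := by
  have h1 := (hyp_poch_pos (show 0 < c + 1 by linarith) n).ne'
  have h3 : (n.factorial : ℝ) ≠ 0 := by positivity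
  unfold hypTerm
  simp only [hyp_poch_shift, Nat.factorial_succ, one_pow]
  push_cast
  field_simp

lemma hyp_term_c (a b : ℝ) {c : ℝ} (hc : 0 < c) (n : ℕ) :
    hypTerm a b (c + 1) 1 n = hypTerm a b c 1 n * (c / (c + n)) := by
  have h1 := (hyp_poch_pos (show 0 < c + 1 by linarith) n).ne'
  have h0 := (hyp_poch_pos hc n).ne'
  have h2 : (c + n) ≠ 0 := by positivity
  have h3 : (n.factorial : ℝ) ≠ 0 := by positivity
  have h4 : c * (ascPochhammer ℝ n).eval (c + 1) = (ascPochhammer ℝ n).eval c * (c + n) := by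
    rw [← hyp_poch_shift, ascPochhammer_succ_eval]
  unfold hypTerm
  simp only [one_pow]
  field_simp
  linear_combination (-(eval a (ascPochhammer ℝ n)) * eval b (ascPochhammer ℝ n)) * h4

lemma hyp_contig (a b : ℝ) {c : ℝ} (hc : 0 < c) (n : ℕ) :
    (n + 1 : ℝ) * hypTerm a b c 1 (n + 1) - n * hypTerm a b c 1 n
      + (c - a - b) * hypTerm a b c 1 n
      = (c - a) * (c - b) / c * hypTerm a b (c + 1) 1 n := by
  have h2 : (c + n) ≠ 0 := by positivity
  rw [hyp_term_succ a b hc, hyp_term_c a b hc]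
  field_simp
  ring

lemma hyp_summable {a b c : ℝ} (hc : 0 < c) (hs : a + b < c) :
    Summable (fun n => |hypTerm a b c 1 n|) := by
  set t := fun n => |hypTerm a b c 1 n| with ht
  set s := c - a - b with hsd
  have hs0 : 0 < s := by rw [hsd]; linarith
  obtain ⟨N, hN⟩ := exists_nat_ge (max (max (-a) (-b)) (2 * ((c - a) * (c - b)) / s))
  have key : ∀ n : ℕ, N ≤ n → s / 2 * t n ≤ n * t n - (n + 1 : ℕ) * t (n + 1) := by
    intro n hn
    have hn' : (N : ℝ) ≤ n := by exact_mod_cast hn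
    have h1 : -a ≤ N := le_trans (le_trans (le_max_left _ _) (le_max_left _ _)) hN
    have h2 : -b ≤ N := le_trans (le_trans (le_max_right _ _) (le_max_left _ _)) hN
    have h3 : 2 * ((c - a) * (c - b)) / s ≤ N := le_trans (le_max_right _ _) hN
    have hcn : 0 < c + n := by positivity
    have e : ((n + 1 : ℕ) : ℝ) * t (n + 1) = t n * ((a + n) * (b + n) / (c + n)) := by
      have := congrArg abs (hyp_term_succ a b hc n)
      rw [abs_mul, abs_mul, abs_of_nonneg (by positivity : (0:ℝ) ≤ n + 1),
        abs_of_nonneg (div_nonneg (mul_nonneg (by linarith) (by linarith)) hcn.le)] at this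
      push_cast
      exact this
    have h4 : s / 2 ≤ n - (a + n) * (b + n) / (c + n) := by
      rw [div_le_iff₀ hs0] at h3
      rw [le_sub_iff_add_le, ← le_sub_iff_add_le', div_le_iff₀ hcn]
      have : (N : ℝ) * s ≤ n * s := by gcongr
      have h5 : 0 < c * s := by positivity
      have h6 : s = c - a - b := hsd
      have h7 : (n - s / 2) * (c + n) - (a + n) * (b + n)
        = (c * s + n * s) / 2 - (c - a) * (c - b) := by rw [h6]; ring
      nlinarith
    rw [e]
    have ht0 : 0 ≤ t n := abs_nonneg _
    nlinarith
  rw [← summable_nat_add_iff N]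
  have hpart : ∀ m : ℕ, s / 2 * ∑ i ∈ Finset.range m, t (i + N)
      ≤ N * t N - (m + N : ℕ) * t (m + N) := by
    intro m
    induction m with
    | zero => simp
    | succ m ih =>
      rw [Finset.sum_range_succ, mul_add]
      have := key (m + N) (by omega)
      have e : m + 1 + N = m + N + 1 := by omega
      rw [e]
      linarith
  refine summable_of_sum_range_le (c := N * t N / (s / 2)) (fun n => abs_nonneg _) fun m => ?_
  rw [le_div_iff₀ (by positivity)]
  have h1 := hpart m
  have h2 : 0 ≤ ((m + N : ℕ) : ℝ) * t (m + N) := mul_nonneg (by positivity) (abs_nonneg _)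
  linarith

lemma hyp_bound (a b c : ℝ) {z : ℝ} (hz : z ∈ Icc (0:ℝ) 1) (n : ℕ) :
    ‖hypTerm a b c z n‖ ≤ |hypTerm a b c 1 n| := by
  rw [hyp_term_eq, Real.norm_eq_abs, abs_mul, abs_of_nonneg (pow_nonneg hz.1 n)]
  exact mul_le_of_le_one_right (abs_nonneg _) (pow_le_one₀ hz.1 hz.2)

lemma hyp_summable_z {a b c : ℝ} (hc : 0 < c) (hs : a + b < c) {z : ℝ} (hz : z ∈ Icc (0:ℝ) 1) :
    Summable (hypTerm a b c z) :=
  Summable.of_norm_bounded (hyp_summable hc hs) (hyp_bound a b c hz)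

lemma hyp_cont {a b c : ℝ} (hc : 0 < c) (hs : a + b < c) :
    ContinuousOn (hyp2F1 a b c) (Icc 0 1) := by
  unfold hyp2F1
  refine continuousOn_tsum (u := fun n => |hypTerm a b c 1 n|) (fun n => ?_)
    (hyp_summable hc hs) (fun n z hz => hyp_bound a b c hz n)
  have e : (fun z => hypTerm a b c z n) = fun z => hypTerm a b c 1 n * z ^ n :=
    funext fun z => hyp_term_eq a b c z n
  rw [e]
  fun_prop

lemma hyp_zero (a b c : ℝ) : hyp2F1 a b c 0 = 1 := by
  unfold hyp2F1
  rw [tsum_eq_single 0]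
  · exact hyp_term_zero _ _ _ _
  · intro n hn
    rw [hyp_term_eq]; simp [hn]

lemma hyp_deriv0 {a b c : ℝ} (hc : 0 < c) (hs : a + b < c) {z : ℝ} (hz : z ∈ Ioo (0:ℝ) 1) :
    Summable (fun n : ℕ => hypTerm a b c 1 n * (n * z ^ (n - 1))) ∧
    HasDerivAt (hyp2F1 a b c) (∑' n : ℕ, hypTerm a b c 1 n * (n * z ^ (n - 1))) z := by
  obtain ⟨r, hzr, hr1⟩ := exists_between hz.2
  have hr0 : 0 < r := hz.1.trans hzr
  set M := ∑' n, |hypTerm a b c 1 n| with hM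
  have hle : ∀ n, |hypTerm a b c 1 n| ≤ M := fun n =>
    (hyp_summable hc hs).le_tsum n (fun _ _ => abs_nonneg _)
  have hsum : Summable (fun n : ℕ => M * ((n : ℝ) * r ^ (n - 1))) := by
    apply Summable.mul_left
    have := summable_pow_mul_geometric_of_norm_lt_one 1 (r := r)
      (by rw [Real.norm_eq_abs, abs_of_pos hr0]; exact hr1)
    rw [← summable_nat_add_iff 1]
    rw [← summable_nat_add_iff 1] at this
    refine (this.mul_left r⁻¹).congr fun n => ?_
    simp [pow_succ]
    field_simp
  have hbd : ∀ n : ℕ, ∀ y ∈ Ioo (0:ℝ) r,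
      ‖hypTerm a b c 1 n * (n * y ^ (n - 1))‖ ≤ M * ((n : ℝ) * r ^ (n - 1)) := by
    intro n y hy
    rw [norm_mul, Real.norm_eq_abs, Real.norm_eq_abs,
      abs_of_nonneg (mul_nonneg n.cast_nonneg (pow_nonneg hy.1.le _))]
    have := pow_le_pow_left₀ hy.1.le hy.2.le (n - 1)
    exact mul_le_mul (hle n) (by gcongr) (mul_nonneg n.cast_nonneg (pow_nonneg hy.1.le _))
      ((abs_nonneg _).trans (hle n))
  refine ⟨Summable.of_norm_bounded hsum (fun n => hbd n z ⟨hz.1, hzr⟩), ?_⟩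
  have hfun : hyp2F1 a b c = fun z => ∑' n, hypTerm a b c 1 n * z ^ n := by
    funext y; unfold hyp2F1; exact tsum_congr fun n => hyp_term_eq a b c y n
  rw [hfun]
  refine hasDerivAt_tsum_of_isPreconnected (t := Ioo 0 r) hsum isOpen_Ioo isPreconnected_Ioo
    (fun n y hy => ?_) hbd (y₀ := z) ⟨hz.1, hzr⟩ ?_ ⟨hz.1, hzr⟩
  · exact (hasDerivAt_pow n y).const_mul _
  · exact (hyp_summable_z hc hs ⟨hz.1.le, hz.2.le⟩).congr fun n => hyp_term_eq a b c z n

lemma hyp_deriv_shift {a b c : ℝ} (hc : 0 < c) (hs : a + b < c) {z : ℝ} (hz : z ∈ Ioo (0:ℝ) 1) :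
    HasDerivAt (hyp2F1 a b c) (a * b / c * hyp2F1 (a + 1) (b + 1) (c + 1) z) z := by
  obtain ⟨h1, h2⟩ := hyp_deriv0 hc hs hz
  convert h2 using 1
  rw [h1.tsum_eq_zero_add]
  unfold hyp2F1
  rw [← tsum_mul_left]
  simp only [Nat.cast_zero, zero_mul, mul_zero, zero_add]
  refine tsum_congr fun n => ?_
  rw [hyp_term_eq, ← mul_assoc, ← hyp_term_deriv a b hc, Nat.add_sub_cancel]
  push_cast
  ring

lemma hyp_ode {a b c : ℝ} (hc : 0 < c) (hs : a + b < c) {z : ℝ} (hz : z ∈ Ioo (0:ℝ) 1) :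
    ∃ d, HasDerivAt (hyp2F1 a b c) d z ∧ (1 - z) * d + (c - a - b) * hyp2F1 a b c z
      = (c - a) * (c - b) / c * hyp2F1 a b (c + 1) z := by
  obtain ⟨h1, h2⟩ := hyp_deriv0 hc hs hz
  refine ⟨_, h2, ?_⟩
  have hz' : z ∈ Icc (0:ℝ) 1 := ⟨hz.1.le, hz.2.le⟩
  have e1 : HasSum (fun n : ℕ => (n + 1 : ℝ) * hypTerm a b c 1 (n + 1) * z ^ n)
      (∑' n : ℕ, hypTerm a b c 1 n * (n * z ^ (n - 1))) := by
    have := h1.hasSum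
    rw [← hasSum_nat_add_iff' 1] at this
    simp only [Finset.range_one, Finset.sum_singleton, Nat.cast_zero, zero_mul, mul_zero,
      sub_zero] at this
    have e : (fun n : ℕ => (n + 1 : ℝ) * hypTerm a b c 1 (n + 1) * z ^ n) =
        fun n : ℕ => hypTerm a b c 1 (n + 1) * (((n + 1 : ℕ) : ℝ) * z ^ (n + 1 - 1)) := by
      funext n
      rw [Nat.add_sub_cancel]
      push_cast
      ring
    rw [e]
    exact this
  have e2 : HasSum (fun n : ℕ => (n : ℝ) * hypTerm a b c 1 n * z ^ n)
      (z * ∑' n : ℕ, hypTerm a b c 1 n * (n * z ^ (n - 1))) := by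
    have e : (fun n : ℕ => (n : ℝ) * hypTerm a b c 1 n * z ^ n) =
        fun n : ℕ => z * (hypTerm a b c 1 n * (n * z ^ (n - 1))) := by
      funext n
      rcases n with _ | n
      · simp
      · rw [Nat.add_sub_cancel, pow_succ]; ring
    rw [e]
    exact h1.hasSum.mul_left z
  have e3 := (hyp_summable_z hc hs hz').hasSum
  have e4 := (hyp_summable_z (c := c + 1) (a := a) (b := b) (by linarith) (by linarith) hz').hasSum
  have e5 := (e1.sub e2).add (e3.mul_left (c - a - b))
  have e6 := e4.mul_left ((c - a) * (c - b) / c)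
  have e8 : (fun n : ℕ => (n + 1 : ℝ) * hypTerm a b c 1 (n + 1) * z ^ n
      - n * hypTerm a b c 1 n * z ^ n + (c - a - b) * hypTerm a b c z n) =
      fun n : ℕ => (c - a) * (c - b) / c * hypTerm a b (c + 1) z n := by
    funext n
    rw [hyp_term_eq a b c z, hyp_term_eq a b (c + 1) z]
    linear_combination z ^ n * hyp_contig a b hc n
  rw [e8] at e5
  have e7 := e5.unique e6
  unfold hyp2F1
  linarith

lemma hyp_step {a b c : ℝ} (hc : 0 < c) (ha : a < c) (hb : b < c) (hs : a + b < c)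
    (h : ∃ δ > 0, ∀ z ∈ Icc (0:ℝ) 1, δ ≤ hyp2F1 a b (c + 1) z) :
    ∃ δ > 0, ∀ z ∈ Icc (0:ℝ) 1, δ ≤ hyp2F1 a b c z := by
  obtain ⟨δ, hδ, h⟩ := h
  set k := (c - a) * (c - b) / c with hk
  have hk0 : 0 < k := div_pos (mul_pos (by linarith) (by linarith)) hc
  set s := c - a - b with hsd
  have hs0 : 0 < s := by rw [hsd]; linarith
  set m := min 1 (k * δ / s) with hm
  have hm0 : 0 < m := lt_min one_pos (by positivity)
  have hm1 : m ≤ 1 := min_le_left _ _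
  have hms : s * m ≤ k * δ := by
    have : m ≤ k * δ / s := min_le_right _ _
    rw [le_div_iff₀ hs0] at this
    linarith
  refine ⟨m, hm0, ?_⟩
  have hmono : MonotoneOn (fun z => (1 - z) ^ (-s) * (hyp2F1 a b c z - m)) (Ico (0:ℝ) 1) := by
    have hd : ∀ z ∈ Ioo (0:ℝ) 1, ∃ D ≥ 0,
        HasDerivAt (fun z => (1 - z) ^ (-s) * (hyp2F1 a b c z - m)) D z := by
      intro z hz
      obtain ⟨d, hd, he⟩ := hyp_ode hc hs hz
      have hz1 : 0 < 1 - z := by linarith [hz.2]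
      have hp : HasDerivAt (fun z : ℝ => (1 - z) ^ (-s)) (-1 * (-s) * (1 - z) ^ (-s - 1)) z :=
        ((hasDerivAt_id z).const_sub 1).rpow_const (Or.inl hz1.ne')
      refine ⟨_, ?_, hp.mul (hd.sub_const m)⟩
      have e : (1 - z) ^ (-s) = (1 - z) ^ (-s - 1) * (1 - z) := by
        rw [← Real.rpow_add_one hz1.ne']; congr 1; ring
      rw [e]
      have hz2 := h z ⟨hz.1.le, hz.2.le⟩
      have : -1 * -s * (1 - z) ^ (-s - 1) * (hyp2F1 a b c z - m)
          + (1 - z) ^ (-s - 1) * (1 - z) * d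
          = (1 - z) ^ (-s - 1) * (k * hyp2F1 a b (c + 1) z - s * m) := by
        linear_combination (1 - z) ^ (-s - 1) * he
      rw [ge_iff_le, this]
      have : k * δ ≤ k * hyp2F1 a b (c + 1) z := by gcongr
      exact mul_nonneg (by positivity) (by linarith)
    refine monotoneOn_of_deriv_nonneg (convex_Ico 0 1) ?_ ?_ ?_
    · refine ContinuousOn.mul ?_ (((hyp_cont hc hs).mono Ico_subset_Icc_self).sub
        continuousOn_const)
      exact (continuousOn_const.sub continuousOn_id).rpow_const
        (fun z hz => Or.inl (sub_pos.2 hz.2).ne')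
    · rw [interior_Ico]
      intro z hz
      obtain ⟨D, -, hD⟩ := hd z hz
      exact hD.differentiableAt.differentiableWithinAt
    · rw [interior_Ico]
      intro z hz
      obtain ⟨D, hD0, hD⟩ := hd z hz
      rw [hD.deriv]; exact hD0
  have hIco : ∀ z ∈ Ico (0:ℝ) 1, m ≤ hyp2F1 a b c z := by
    intro z hz
    have := hmono (left_mem_Ico.2 one_pos) hz hz.1
    simp only [sub_zero, Real.one_rpow, hyp_zero, one_mul] at this
    have hz1 : 0 < 1 - z := by linarith [hz.2]
    have h0 : 0 ≤ (1 - z) ^ (-s) * (hyp2F1 a b c z - m) := by linarith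
    have := nonneg_of_mul_nonneg_right h0 (by positivity)
    linarith
  intro z hz
  have hcl : z ∈ closure (Ico (0:ℝ) 1) := by rw [closure_Ico zero_ne_one]; exact hz
  exact closure_minimal (s := Ico (0:ℝ) 1) (t := Icc (0:ℝ) 1 ∩ hyp2F1 a b c ⁻¹' Ici m)
    (fun y hy => ⟨Ico_subset_Icc_self hy, hIco y hy⟩)
    ((hyp_cont hc hs).preimage_isClosed_of_isClosed isClosed_Icc isClosed_Ici) hcl |>.2

lemma hyp_iter (a b : ℝ) (m : ℕ) : ∀ {c : ℝ} (_ : 0 < c) (_ : a < c) (_ : b < c) (_ : a + b < c)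
    (_ : ∃ δ > 0, ∀ z ∈ Icc (0:ℝ) 1, δ ≤ hyp2F1 a b (c + m) z),
    ∃ δ > 0, ∀ z ∈ Icc (0:ℝ) 1, δ ≤ hyp2F1 a b c z := by
  induction m with
  | zero => intro c _ _ _ _ h; simpa using h
  | succ m ih =>
    intro c hc ha hb hs h
    refine hyp_step hc ha hb hs (ih (by linarith) (by linarith) (by linarith) (by linarith) ?_)
    have e : c + 1 + m = c + ((m + 1 : ℕ) : ℝ) := by push_cast; ring
    rw [e]; exact h

lemma hyp_decay (a b : ℝ) {c : ℝ} (hc : 0 < c) (m n : ℕ) :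
    |hypTerm a b (c + m) 1 (n + 1)| ≤ c / (c + m) * |hypTerm a b c 1 (n + 1)| := by
  induction m with
  | zero => simp [hc.ne']
  | succ m ih =>
    have hcm : 0 < c + m := by positivity
    have e : c + ((m + 1 : ℕ) : ℝ) = c + m + 1 := by push_cast; ring
    rw [e, hyp_term_c a b hcm, abs_mul,
      abs_of_nonneg (by positivity : 0 ≤ (c + m) / (c + m + ((n + 1 : ℕ) : ℝ)))]
    have h1 : (c + m) / (c + m + ((n + 1 : ℕ) : ℝ)) ≤ (c + m) / (c + m + 1) := by
      gcongr; push_cast; linarith [(n.cast_nonneg : (0:ℝ) ≤ n)]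
    calc _ ≤ (c / (c + m) * |hypTerm a b c 1 (n + 1)|) * ((c + m) / (c + m + 1)) := by gcongr
      _ = _ := by field_simp

lemma hyp_pos {a b c : ℝ} (hc : 0 < c) (ha : a < c) (hb : b < c) (hs : a + b < c) :
    ∃ δ > 0, ∀ z ∈ Icc (0:ℝ) 1, δ ≤ hyp2F1 a b c z := by
  set T := ∑' n, |hypTerm a b c 1 (n + 1)| with hT
  have hsum1 := (summable_nat_add_iff 1).2 (hyp_summable hc hs)
  obtain ⟨m, hm⟩ := exists_nat_ge (2 * c * T)
  refine hyp_iter a b m hc ha hb hs ⟨1 / 2, by norm_num, fun z hz => ?_⟩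
  have hcm : 0 < c + m := by positivity
  have hscm : a + b < c + m := by linarith [(m.cast_nonneg : (0:ℝ) ≤ m)]
  have hS := hyp_summable_z hcm hscm hz
  unfold hyp2F1
  rw [hS.tsum_eq_zero_add, hyp_term_zero]
  have hb : ‖∑' n, hypTerm a b (c + m) z (n + 1)‖ ≤ c / (c + m) * T := by
    refine tsum_of_norm_bounded (hsum1.hasSum.mul_left _) fun n => ?_
    exact (hyp_bound a b (c + m) hz _).trans (hyp_decay a b hc m n)
  have hb2 : c / (c + m) * T ≤ 1 / 2 := by
    rw [div_mul_eq_mul_div, div_le_iff₀ hcm]; linarith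
  have := neg_abs_le (∑' n, hypTerm a b (c + m) z (n + 1))
  rw [Real.norm_eq_abs] at hb
  linarith

/-- For κ ∈ (0,8) and ν > max(−4, κ/2−6), the function
F(z) = ₂F₁((2ν+4)/κ, 1−4/κ, (2ν+8)/κ; z) is monotone on [0,1] and satisfies
0 < min(1, F(1)) ≤ F(z) ≤ max(1, F(1)) for all z ∈ [0,1]. -/
theorem hSLE_F_monotone_bounded (κ ν : ℝ) (hκ : κ ∈ Set.Ioo (0 : ℝ) 8)
    (hν : ν > max (-4) (κ / 2 - 6)) :
    (MonotoneOn (fun z => hyp2F1 ((2*ν+4)/κ) (1 - 4/κ) ((2*ν+8)/κ) z) (Set.Icc (0:ℝ) 1) ∨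
      AntitoneOn (fun z => hyp2F1 ((2*ν+4)/κ) (1 - 4/κ) ((2*ν+8)/κ) z) (Set.Icc (0:ℝ) 1)) ∧
    (0 < min 1 (hyp2F1 ((2*ν+4)/κ) (1 - 4/κ) ((2*ν+8)/κ) 1)) ∧
    (∀ z ∈ Set.Icc (0:ℝ) 1,
      min 1 (hyp2F1 ((2*ν+4)/κ) (1 - 4/κ) ((2*ν+8)/κ) 1)
          ≤ hyp2F1 ((2*ν+4)/κ) (1 - 4/κ) ((2*ν+8)/κ) z ∧
      hyp2F1 ((2*ν+4)/κ) (1 - 4/κ) ((2*ν+8)/κ) z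
          ≤ max 1 (hyp2F1 ((2*ν+4)/κ) (1 - 4/κ) ((2*ν+8)/κ) 1)) := by
  obtain ⟨hκ0, hκ8⟩ := hκ
  have hν1 : -4 < ν := lt_of_le_of_lt (le_max_left _ _) hν
  have hν2 : κ / 2 - 6 < ν := lt_of_le_of_lt (le_max_right _ _) hν
  set A := (2 * ν + 4) / κ with hA
  set B := 1 - 4 / κ with hB
  set C := (2 * ν + 8) / κ with hC
  have hq : 0 < 4 / κ := by positivity
  have hC0 : 0 < C := div_pos (by linarith) hκ0
  have hCA : C = A + 4 / κ := by rw [hC, hA]; ring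
  have hAC : A < C := by linarith
  have hBC : B < C := by
    have : 1 < (2 * ν + 12) / κ := by rw [lt_div_iff₀ hκ0]; linarith
    have e : (2 * ν + 12) / κ = C + 4 / κ := by rw [hC]; ring
    linarith
  have hq2 : 1 / 2 < 4 / κ := by rw [lt_div_iff₀ hκ0]; linarith
  have hs : A + B < C := by linarith
  have hG : ∀ z ∈ Ioo (0:ℝ) 1, 0 ≤ hyp2F1 (A + 1) (B + 1) (C + 1) z := by
    intro z hz
    rcases lt_or_ge B 0 with hB0 | hB0
    · obtain ⟨δ, hδ, h⟩ := hyp_pos (a := A + 1) (b := B + 1) (c := C + 1) (by linarith)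
        (by linarith) (by linarith) (by linarith)
      exact hδ.le.trans (h z ⟨hz.1.le, hz.2.le⟩)
    · refine tsum_nonneg fun n => ?_
      have h1 := (hyp_poch_pos (show 0 < A + 1 by linarith) n).le
      have h2 := (hyp_poch_pos (show 0 < B + 1 by linarith) n).le
      have h3 := (hyp_poch_pos (show 0 < C + 1 by linarith) n).le
      have h4 := pow_nonneg hz.1.le n
      unfold hypTerm
      positivity
  have hmon : MonotoneOn (fun z => hyp2F1 A B C z) (Set.Icc (0:ℝ) 1) ∨
      AntitoneOn (fun z => hyp2F1 A B C z) (Set.Icc (0:ℝ) 1) := by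
    rcases le_total 0 (A * B / C) with h | h
    · left
      refine monotoneOn_of_deriv_nonneg (convex_Icc 0 1) (hyp_cont hC0 hs) ?_ ?_ <;>
        rw [interior_Icc] <;> intro z hz
      · exact (hyp_deriv_shift hC0 hs hz).differentiableAt.differentiableWithinAt
      · rw [(hyp_deriv_shift hC0 hs hz).deriv]
        exact mul_nonneg h (hG z hz)
    · right
      refine antitoneOn_of_deriv_nonpos (convex_Icc 0 1) (hyp_cont hC0 hs) ?_ ?_ <;>
        rw [interior_Icc] <;> intro z hz
      · exact (hyp_deriv_shift hC0 hs hz).differentiableAt.differentiableWithinAt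
      · rw [(hyp_deriv_shift hC0 hs hz).deriv]
        exact mul_nonpos_of_nonpos_of_nonneg h (hG z hz)
  have h0 : (0:ℝ) ∈ Icc (0:ℝ) 1 := ⟨le_rfl, zero_le_one⟩
  have h1 : (1:ℝ) ∈ Icc (0:ℝ) 1 := ⟨zero_le_one, le_rfl⟩
  refine ⟨hmon, ?_, ?_⟩
  · obtain ⟨δ, hδ, h⟩ := hyp_pos hC0 hAC hBC hs
    exact lt_min one_pos (hδ.trans_le (h 1 h1))
  · intro z hz
    rcases hmon with h | h
    · have e0 := h h0 hz hz.1
      have e1 := h hz h1 hz.2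
      simp only [hyp_zero] at e0 e1
      exact ⟨(min_le_left _ _).trans e0, e1.trans (le_max_right _ _)⟩
    · have e0 := h h0 hz hz.1
      have e1 := h hz h1 hz.2
      simp only [hyp_zero] at e0 e1
      exact ⟨(min_le_right _ _).trans e1, e0.trans (le_max_left _ _)⟩
end

section
/- Fix κ ∈ (0,8) and ν ∈ ℝ, set h = (6−κ)/(2κ), a = (ν+2)/κ, b = (ν+2)(ν+6−κ)/(4κ), and let F : (0,1) → ℝ be a twice-differentiable solution of Euler's hypergeometric equation z(1−z)F''(z) + ((2ν+8)/κ − (2ν+2κ)/κ · z)F'(z) − (2(ν+2)(κ−4)/κ²)F(z) = 0. Then Z(x₁,x₂,x₃,x₄) = (x₄−x₁)^{−2h}(x₃−x₂)^{−2b} z^a F(z), with z = (x₂−x₁)(x₄−x₃)/((x₃−x₁)(x₄−x₂)), satisfies the partial differential equation (κ/2)∂₁²Z + Σ_{i=2,3,4} (2/(xᵢ−x₁))∂ᵢZ + (−2h/(x₄−x₁)² − 2b/(x₂−x₁)² − 2b/(x₃−x₁)²)Z = 0 on {x₁<x₂<x₃<x₄}. -/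
/-- Derivative of a product of powers times `G ∘ w`. -/
theorem hSLE_aux_deriv (A B w G : ℝ → ℝ) (A' B' w' G' p q a t : ℝ)
    (hA : HasDerivAt A A' t) (hB : HasDerivAt B B' t) (hw : HasDerivAt w w' t)
    (hG : HasDerivAt G G' (w t)) (pA : 0 < A t) (pB : 0 < B t) (pw : 0 < w t) :
    HasDerivAt (fun s => A s ^ p * B s ^ q * w s ^ a * G (w s))
      (A t ^ p * B t ^ q * w t ^ a *
        ((p * A' / A t + q * B' / B t + a * w' / w t) * G (w t) + w' * G')) t := by
  have h1 := hA.rpow_const (p := p) (Or.inl pA.ne')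
  have h2 := hB.rpow_const (p := q) (Or.inl pB.ne')
  have h3 := hw.rpow_const (p := a) (Or.inl pw.ne')
  have h4 : HasDerivAt (fun s => G (w s)) (G' * w') t := hG.comp t hw
  refine (((h1.mul h2).mul h3).mul h4).congr_deriv ?_
  try simp only [Pi.mul_apply]
  rw [Real.rpow_sub_one pA.ne', Real.rpow_sub_one pB.ne', Real.rpow_sub_one pw.ne']
  field_simp

/-- The final algebraic identity, in the gap variables. -/
theorem hSLE_aux_alg (κ ν u v w M f f1 f2 z zd zdd g gd z2 z3 z4 : ℝ)
    (hκ : 0 < κ) (hu : 0 < u) (hv : 0 < v) (hw : 0 < w)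
    (hz : z = u * w / ((u + v) * (v + w)))
    (hzd : zd = -(w * v) / ((u + v) ^ 2 * (v + w)))
    (hzdd : zdd = -2 * (w * v) / ((u + v) ^ 3 * (v + w)))
    (hg : g = (6 - κ) / κ / (u + v + w) - (ν + 2) / κ * (v / (u * (u + v))))
    (hgd : gd = (6 - κ) / κ / (u + v + w) ^ 2 - (ν + 2) / κ * (1 / u ^ 2 - 1 / (u + v) ^ 2))
    (hz2 : z2 = w * (u + v + w) / ((u + v) * (v + w) ^ 2))
    (hz3 : z3 = -(u * (u + v + w)) / ((u + v) ^ 2 * (v + w)))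
    (hz4 : z4 = u * v / ((u + v) * (v + w) ^ 2))
    (hODE : z * (1 - z) * f2 + ((2*ν+8)/κ - (2*ν+2*κ)/κ * z) * f1
        - (2*(ν+2)*(κ-4)/κ^2) * f = 0) :
    κ / 2 * (M * g * (g * f + zd * f1) + M * (gd * f + g * (zd * f1) + (zdd * f1 + zd * (zd * f2))))
      + 2 / u * (M * (((ν + 2) * (ν + 6 - κ) / (2 * κ) / v + (ν + 2) / κ * z2 / z) * f + z2 * f1))
      + 2 / (u + v) *
        (M * ((-((ν + 2) * (ν + 6 - κ) / (2 * κ)) / v + (ν + 2) / κ * z3 / z) * f + z3 * f1))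
      + 2 / (u + v + w) *
        (M * ((-((6 - κ) / κ) / (u + v + w) + (ν + 2) / κ * z4 / z) * f + z4 * f1))
      + (-2 * ((6 - κ) / (2 * κ)) / (u + v + w) ^ 2
            - 2 * ((ν + 2) * (ν + 6 - κ) / (4 * κ)) / u ^ 2
            - 2 * ((ν + 2) * (ν + 6 - κ) / (4 * κ)) / (u + v) ^ 2) * (M * f) = 0 := by
  have e1 : z * (1 - z) = u * w * v * (u + v + w) / ((u + v) ^ 2 * (v + w) ^ 2) := by
    rw [hz]; field_simp; ring
  have key : f2 = (u + v) ^ 2 * (v + w) ^ 2 / (u * w * v * (u + v + w)) *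
      ((2*(ν+2)*(κ-4)/κ^2) * f - ((2*ν+8)/κ - (2*ν+2*κ)/κ * z) * f1) := by
    rw [e1] at hODE
    have : (2*(ν+2)*(κ-4)/κ^2) * f - ((2*ν+8)/κ - (2*ν+2*κ)/κ * z) * f1 =
      u * w * v * (u + v + w) / ((u + v) ^ 2 * (v + w) ^ 2) * f2 := by linarith
    rw [this]; field_simp
  have cF : κ / 2 * (g * g + gd + zd * zd * ((u + v) ^ 2 * (v + w) ^ 2 / (u * w * v * (u + v + w)) *
        (2*(ν+2)*(κ-4)/κ^2)))
      + 2 / u * ((ν + 2) * (ν + 6 - κ) / (2 * κ) / v + (ν + 2) / κ * z2 / z)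
      + 2 / (u + v) * (-((ν + 2) * (ν + 6 - κ) / (2 * κ)) / v + (ν + 2) / κ * z3 / z)
      + 2 / (u + v + w) * (-((6 - κ) / κ) / (u + v + w) + (ν + 2) / κ * z4 / z)
      + (-2 * ((6 - κ) / (2 * κ)) / (u + v + w) ^ 2
            - 2 * ((ν + 2) * (ν + 6 - κ) / (4 * κ)) / u ^ 2
            - 2 * ((ν + 2) * (ν + 6 - κ) / (4 * κ)) / (u + v) ^ 2) = 0 := by
    subst hz hzd hg hgd hz2 hz3 hz4
    field_simp
    ring
  have cF1 : κ / 2 * (2 * g * zd + zdd - zd * zd * ((u + v) ^ 2 * (v + w) ^ 2 /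
        (u * w * v * (u + v + w)) * ((2*ν+8)/κ - (2*ν+2*κ)/κ * z)))
      + 2 / u * z2 + 2 / (u + v) * z3 + 2 / (u + v + w) * z4 = 0 := by
    subst hz hzd hzdd hg hz2 hz3 hz4
    field_simp
    ring
  rw [key]
  linear_combination M * f * cF + M * f1 * cF1

/-- If F solves Euler's hypergeometric equation on (0,1), then
Z(x₁,x₂,x₃,x₄) = (x₄−x₁)^{−2h}(x₃−x₂)^{−2b} z^a F(z), with z the cross-ratio,
satisfies the first BPZ-type PDE of the local 2-SLE system. -/
theorem hSLE_partition_PDE (κ ν : ℝ) (hκ : κ ∈ Set.Ioo (0:ℝ) 8)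
    (F : ℝ → ℝ) (hFsm : ContDiffOn ℝ 2 F (Set.Ioo (0:ℝ) 1))
    (hODE : ∀ z ∈ Set.Ioo (0:ℝ) 1,
      z * (1 - z) * deriv (deriv F) z
        + ((2*ν+8)/κ - (2*ν+2*κ)/κ * z) * deriv F z
        - (2*(ν+2)*(κ-4)/κ^2) * F z = 0) :
    ∀ x₁ x₂ x₃ x₄ : ℝ, x₁ < x₂ → x₂ < x₃ → x₃ < x₄ →
      (let Z : ℝ → ℝ → ℝ → ℝ → ℝ := fun y₁ y₂ y₃ y₄ =>
        (y₄ - y₁) ^ (-2 * ((6 - κ) / (2 * κ))) *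
          (y₃ - y₂) ^ (-2 * ((ν + 2) * (ν + 6 - κ) / (4 * κ))) *
          ((y₂ - y₁) * (y₄ - y₃) / ((y₃ - y₁) * (y₄ - y₂))) ^ ((ν + 2) / κ) *
          F ((y₂ - y₁) * (y₄ - y₃) / ((y₃ - y₁) * (y₄ - y₂)))
      κ / 2 * deriv (deriv (fun t => Z t x₂ x₃ x₄)) x₁
        + 2 / (x₂ - x₁) * deriv (fun t => Z x₁ t x₃ x₄) x₂
        + 2 / (x₃ - x₁) * deriv (fun t => Z x₁ x₂ t x₄) x₃
        + 2 / (x₄ - x₁) * deriv (fun t => Z x₁ x₂ x₃ t) x₄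
        + (-2 * ((6 - κ) / (2 * κ)) / (x₄ - x₁) ^ 2
            - 2 * ((ν + 2) * (ν + 6 - κ) / (4 * κ)) / (x₂ - x₁) ^ 2
            - 2 * ((ν + 2) * (ν + 6 - κ) / (4 * κ)) / (x₃ - x₁) ^ 2) *
          Z x₁ x₂ x₃ x₄ = 0) := by
  obtain ⟨hκ0, -⟩ := hκ
  intro x₁ x₂ x₃ x₄ h12 h23 h34
  have dF : ∀ y ∈ Set.Ioo (0:ℝ) 1, HasDerivAt F (deriv F y) y := fun y hy =>
    ((hFsm.differentiableOn (by norm_num)).differentiableAt (isOpen_Ioo.mem_nhds hy)).hasDerivAt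
  have dF2 : ∀ y ∈ Set.Ioo (0:ℝ) 1, HasDerivAt (deriv F) (deriv (deriv F) y) y := fun y hy =>
    ((((contDiffOn_succ_iff_deriv_of_isOpen (n := 1) isOpen_Ioo).1 hFsm).2.2.differentiableOn
      (by norm_num)).differentiableAt (isOpen_Ioo.mem_nhds hy)).hasDerivAt
  have zpos : ∀ t, t < x₂ →
      (x₂ - t) * (x₄ - x₃) / ((x₃ - t) * (x₄ - x₂)) ∈ Set.Ioo (0:ℝ) 1 := by
    intro t ht
    have a1 : 0 < x₂ - t := by linarith
    have a2 : 0 < x₃ - t := by linarith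
    have a3 : 0 < x₄ - x₂ := by linarith
    have a4 : 0 < x₄ - x₃ := by linarith
    refine ⟨by positivity, ?_⟩
    rw [div_lt_one (by positivity)]
    nlinarith [mul_pos (sub_pos.2 h23) (by linarith : 0 < x₄ - t)]
  intro Z
  set p : ℝ := -2 * ((6 - κ) / (2 * κ)) with hp
  set q : ℝ := -2 * ((ν + 2) * (ν + 6 - κ) / (4 * κ)) with hq
  set a : ℝ := (ν + 2) / κ with ha
  -- first variable
  let zf : ℝ → ℝ := fun t => (x₂ - t) * (x₄ - x₃) / ((x₃ - t) * (x₄ - x₂))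
  let zd : ℝ → ℝ := fun t => -((x₄ - x₃) * (x₃ - x₂)) / ((x₃ - t) ^ 2 * (x₄ - x₂))
  let g : ℝ → ℝ := fun t => (6 - κ) / κ / (x₄ - t) - a * ((x₃ - x₂) / ((x₂ - t) * (x₃ - t)))
  let M : ℝ → ℝ := fun t => (x₄ - t) ^ p * (x₃ - x₂) ^ q * zf t ^ a
  have b42 : x₄ - x₂ ≠ 0 := by linarith
  have hzf : ∀ t, t < x₂ → HasDerivAt zf (zd t) t := by
    intro t ht
    have a2 : x₃ - t ≠ 0 := by linarith
    have h := (((hasDerivAt_id t).const_sub x₂).mul_const (x₄ - x₃)).div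
      (((hasDerivAt_id t).const_sub x₃).mul_const (x₄ - x₂)) (mul_ne_zero a2 b42)
    refine h.congr_deriv ?_
    try simp only [zd, id]
    field_simp
    ring
  have hgen : ∀ t, t < x₂ → ∀ (G : ℝ → ℝ) (G' : ℝ), HasDerivAt G G' (zf t) →
      HasDerivAt (fun s => M s * G (zf s)) (M t * (g t * G (zf t) + zd t * G')) t := by
    intro t ht G G' hG
    have a1 : 0 < x₂ - t := by linarith
    have a2 : 0 < x₃ - t := by linarith
    have a3 : 0 < x₄ - t := by linarith
    have a4 : 0 < x₄ - x₃ := by linarith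
    have a5 : 0 < x₃ - x₂ := by linarith
    have a6 : 0 < x₄ - x₂ := by linarith
    have h := hSLE_aux_deriv (fun s => x₄ - s) (fun _ => x₃ - x₂) zf G _ _ _ _ p q a t
      ((hasDerivAt_id t).const_sub x₄) (hasDerivAt_const t _) (hzf t ht) hG a3 a5 (zpos t ht).1
    refine h.congr_deriv ?_
    have : g t = p * -1 / (x₄ - t) + q * 0 / (x₃ - x₂) + a * zd t / zf t := by
      simp only [g, zd, zf, hp]
      field_simp
      ring
    rw [this]
  have hM : ∀ t, t < x₂ → HasDerivAt M (M t * g t) t := by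
    intro t ht
    have h := hgen t ht (fun _ => 1) 0 (hasDerivAt_const _ _)
    simpa using h
  have hd1 : ∀ t, t < x₂ → deriv (fun t => Z t x₂ x₃ x₄) t =
      M t * (g t * F (zf t) + zd t * deriv F (zf t)) := fun t ht =>
    (hgen t ht F _ (dF _ (zpos t ht))).deriv
  have u0 : 0 < x₂ - x₁ := by linarith
  have v0 : 0 < x₃ - x₂ := by linarith
  have w0 : 0 < x₄ - x₃ := by linarith
  have c31 : 0 < x₃ - x₁ := by linarith
  have c41 : 0 < x₄ - x₁ := by linarith
  have c42 : 0 < x₄ - x₂ := by linarith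
  have hgd : HasDerivAt g ((6 - κ) / κ / (x₄ - x₁) ^ 2
      - a * (1 / (x₂ - x₁) ^ 2 - 1 / (x₃ - x₁) ^ 2)) x₁ := by
    have h := (((hasDerivAt_const x₁ ((6 - κ) / κ)).div ((hasDerivAt_id x₁).const_sub x₄) c41.ne').sub
      (((hasDerivAt_const x₁ (x₃ - x₂)).div (((hasDerivAt_id x₁).const_sub x₂).mul
        ((hasDerivAt_id x₁).const_sub x₃)) (mul_pos u0 c31).ne').const_mul a))
    refine h.congr_deriv ?_
    try simp only [id, Pi.mul_apply]
    field_simp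
    ring
  have hzdd : HasDerivAt zd (-2 * ((x₄ - x₃) * (x₃ - x₂)) / ((x₃ - x₁) ^ 3 * (x₄ - x₂))) x₁ := by
    have h := (hasDerivAt_const x₁ (-((x₄ - x₃) * (x₃ - x₂)))).div
      ((((hasDerivAt_id x₁).const_sub x₃).pow 2).mul_const (x₄ - x₂))
      (mul_pos (pow_pos c31 2) c42).ne'
    refine h.congr_deriv ?_
    try simp only [id, Pi.pow_apply]
    field_simp
    ring
  have zx := zpos x₁ h12
  have hev : deriv (fun t => Z t x₂ x₃ x₄) =ᶠ[nhds x₁]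
      fun t => M t * (g t * F (zf t) + zd t * deriv F (zf t)) := by
    filter_upwards [Iio_mem_nhds h12] with t ht using hd1 t ht
  have k1 : HasDerivAt (fun t => F (zf t)) (deriv F (zf x₁) * zd x₁) x₁ :=
    (dF _ zx).comp x₁ (hzf x₁ h12)
  have k2 : HasDerivAt (fun t => deriv F (zf t)) (deriv (deriv F) (zf x₁) * zd x₁) x₁ :=
    HasDerivAt.comp (h₂ := deriv F) x₁ (dF2 _ zx) (hzf x₁ h12)
  have hd2 := hev.deriv_eq.trans ((hM x₁ h12).mul ((hgd.mul k1).add (hzdd.mul k2))).deriv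
  -- second variable
  have hdz2 : HasDerivAt (fun t => (t - x₁) * (x₄ - x₃) / ((x₃ - x₁) * (x₄ - t)))
      ((x₄ - x₃) * (x₄ - x₁) / ((x₃ - x₁) * (x₄ - x₂) ^ 2)) x₂ := by
    have h := (((hasDerivAt_id x₂).sub_const x₁).mul_const (x₄ - x₃)).div
      (((hasDerivAt_id x₂).const_sub x₄).const_mul (x₃ - x₁)) (mul_pos c31 c42).ne'
    refine h.congr_deriv ?_
    try simp only [id]
    field_simp
    ring
  have hdz3 : HasDerivAt (fun t => (x₂ - x₁) * (x₄ - t) / ((t - x₁) * (x₄ - x₂)))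
      (-((x₂ - x₁) * (x₄ - x₁)) / ((x₃ - x₁) ^ 2 * (x₄ - x₂))) x₃ := by
    have h := (((hasDerivAt_id x₃).const_sub x₄).const_mul (x₂ - x₁)).div
      (((hasDerivAt_id x₃).sub_const x₁).mul_const (x₄ - x₂)) (mul_pos c31 c42).ne'
    refine h.congr_deriv ?_
    try simp only [id]
    field_simp
    ring
  have hdz4 : HasDerivAt (fun t => (x₂ - x₁) * (t - x₃) / ((x₃ - x₁) * (t - x₂)))
      ((x₂ - x₁) * (x₃ - x₂) / ((x₃ - x₁) * (x₄ - x₂) ^ 2)) x₄ := by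
    have h := (((hasDerivAt_id x₄).sub_const x₃).const_mul (x₂ - x₁)).div
      (((hasDerivAt_id x₄).sub_const x₂).const_mul (x₃ - x₁)) (mul_pos c31 c42).ne'
    refine h.congr_deriv ?_
    try simp only [id]
    field_simp
    ring
  have e2 := (hSLE_aux_deriv (fun _ => x₄ - x₁) (fun s => x₃ - s) _ F _ _ _ _ p q a x₂
      (hasDerivAt_const _ _) ((hasDerivAt_id x₂).const_sub x₃) hdz2 (dF _ zx) c41 v0 zx.1).deriv
  have e3 := (hSLE_aux_deriv (fun _ => x₄ - x₁) (fun s => s - x₂) _ F _ _ _ _ p q a x₃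
      (hasDerivAt_const _ _) ((hasDerivAt_id x₃).sub_const x₂) hdz3 (dF _ zx) c41 v0 zx.1).deriv
  have e4 := (hSLE_aux_deriv (fun s => s - x₁) (fun _ => x₃ - x₂) _ F _ _ _ _ p q a x₄
      ((hasDerivAt_id x₄).sub_const x₁) (hasDerivAt_const _ _) hdz4 (dF _ zx) c41 v0 zx.1).deriv
  have s31 : x₃ - x₁ = (x₂ - x₁) + (x₃ - x₂) := by ring
  have s41 : x₄ - x₁ = (x₃ - x₁) + (x₄ - x₃) := by ring
  have s42 : x₄ - x₂ = (x₃ - x₂) + (x₄ - x₃) := by ring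
  have alg := hSLE_aux_alg κ ν (x₂ - x₁) (x₃ - x₂) (x₄ - x₃) (M x₁) (F (zf x₁)) (deriv F (zf x₁))
    (deriv (deriv F) (zf x₁)) (zf x₁) (zd x₁) _ (g x₁) _ _ _ _ hκ0 u0 v0 w0
    (by simp only [zf, ← s31, ← s42]) (by simp only [zd, ← s31, ← s42]) rfl
    (by simp only [g, ← s31, ← s41, ha]) rfl rfl rfl rfl (hODE _ zx)
  simp only [← s31, ← s41, ← s42] at alg
  simp only [Pi.add_apply, Pi.mul_apply] at hd2
  rw [hd2]
  have e2' : deriv (fun t => Z x₁ t x₃ x₄) x₂ = _ := e2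
  have e3' : deriv (fun t => Z x₁ x₂ t x₄) x₃ = _ := e3
  have e4' : deriv (fun t => Z x₁ x₂ x₃ t) x₄ = _ := e4
  rw [e2', e3', e4']
  have hZ : Z x₁ x₂ x₃ x₄ = M x₁ * F (zf x₁) := rfl
  rw [hZ]
  have hMx : (x₄ - x₁) ^ p * (x₃ - x₂) ^ q *
    ((x₂ - x₁) * (x₄ - x₃) / ((x₃ - x₁) * (x₄ - x₂))) ^ a = M x₁ := rfl
  have hzx : (x₂ - x₁) * (x₄ - x₃) / ((x₃ - x₁) * (x₄ - x₂)) = zf x₁ := rfl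
  have hp' : p = -((6 - κ) / κ) := by rw [hp]; field_simp
  have hq' : q = -((ν + 2) * (ν + 6 - κ) / (2 * κ)) := by rw [hq]; field_simp; ring
  simp only [hMx]
  simp only [hzx]
  refine Eq.trans ?_ alg
  generalize M x₁ = m
  generalize zf x₁ = zz
  generalize zd x₁ = zzd
  generalize g x₁ = gg
  rw [hp', hq', ha]
  ring
end

section
/- Fix κ ∈ (0,8) and ν ≤ max(−4, κ/2−6). Then the function G(z) = ₂F₁((2ν+12−κ)/κ, 4/κ, 8/κ; z) is monotone and uniformly bounded on [0,1]: for all z ∈ [0,1], 0 < min(1, G(1)) ≤ G(z) ≤ max(1, G(1)) < ∞, where G(1) ∈ (0,∞) is given by Gauss summation, since C − A − B = (κ − 8 − 2ν)/κ > 0. -/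
open Polynomial Set Filter

open MeasureTheory ProbabilityTheory in
lemma aux_beta {a b : ℝ} (ha : 0 < a) (hb : 0 < b) :
    IntegrableOn (fun x : ℝ => x ^ (a - 1) * (1 - x) ^ (b - 1)) (Ioo 0 1) ∧
    ∫ x in Ioo (0:ℝ) 1, x ^ (a - 1) * (1 - x) ^ (b - 1) = beta a b := by
  have hp := beta_pos ha hb
  have h1 := lintegral_betaPDF_eq_one ha hb
  rw [lintegral_betaPDF] at h1
  have hnn : 0 ≤ᵐ[volume.restrict (Ioo (0:ℝ) 1)]
      fun x : ℝ => 1 / beta a b * x ^ (a - 1) * (1 - x) ^ (b - 1) := by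
    filter_upwards [ae_restrict_mem measurableSet_Ioo] with x hx
    have h2 := Real.rpow_pos_of_pos hx.1 (a-1)
    have h3 := Real.rpow_pos_of_pos (sub_pos.2 hx.2) (b-1)
    simp only [Pi.zero_apply]
    positivity
  have hm : AEStronglyMeasurable (fun x : ℝ => 1 / beta a b * x ^ (a - 1) * (1 - x) ^ (b - 1))
      (volume.restrict (Ioo (0:ℝ) 1)) := by
    apply Measurable.aestronglyMeasurable; fun_prop
  have hI : ∫ x in Ioo (0:ℝ) 1, 1 / beta a b * x ^ (a - 1) * (1 - x) ^ (b - 1) = 1 := by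
    rw [integral_eq_lintegral_of_nonneg_ae hnn hm, h1]; simp
  have hInt : IntegrableOn (fun x : ℝ => 1 / beta a b * x ^ (a - 1) * (1 - x) ^ (b - 1))
      (Ioo 0 1) := by
    by_contra h
    rw [integral_undef h] at hI
    norm_num at hI
  constructor
  · have := hInt.const_mul (beta a b)
    refine this.congr (Eventually.of_forall fun x => ?_)
    simp only []
    field_simp
  · simp_rw [mul_assoc] at hI
    rw [integral_const_mul] at hI
    field_simp at hI
    linarith

lemma aux_poch_pos {x : ℝ} (hx : 0 < x) (n : ℕ) : 0 < (ascPochhammer ℝ n).eval x :=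
  ascPochhammer_pos n x hx

open ProbabilityTheory in
lemma aux_beta_shift {b : ℝ} (hb : 0 < b) (c : ℝ) (hc : 0 < c) (n : ℕ) :
    beta (b + n) c = beta b c *
      ((ascPochhammer ℝ n).eval b / (ascPochhammer ℝ n).eval (b + c)) := by
  induction n with
  | zero => simp
  | succ n ih =>
    have hn : (0:ℝ) ≤ n := n.cast_nonneg
    have e : beta (b + (n + 1 : ℕ)) c = beta (b + n) c * ((b + n) / (b + c + n)) := by
      unfold beta
      have h1 : b + ((n + 1 : ℕ) : ℝ) = (b + n) + 1 := by push_cast; ring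
      have h2 : (b + n) + 1 + c = (b + c + n) + 1 := by ring
      have h3 : b + n + c = b + c + n := by ring
      have p1 : b + c + n ≠ 0 := by positivity
      rw [h1, h2, Real.Gamma_add_one (by positivity), Real.Gamma_add_one p1, h3]
      have := (Real.Gamma_pos_of_pos (show 0 < b + c + n by positivity)).ne'
      field_simp
    rw [e, ih, ascPochhammer_succ_eval, ascPochhammer_succ_eval]
    have := (aux_poch_pos (show 0 < b + c by positivity) n).ne'
    have p1 : b + c + n ≠ 0 := by positivity
    field_simp

lemma aux_binom (A s : ℝ) (h0 : 0 ≤ s) (h1 : s < 1) :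
    HasSum (fun n : ℕ => (ascPochhammer ℝ n).eval A / n.factorial * s ^ n) ((1 - s) ^ (-A)) := by
  have h := (Real.one_div_one_sub_rpow_hasFPowerSeriesOnBall_zero A).hasSum (y := s) (by
    simp [Real.enorm_eq_ofReal h0, h1])
  simp only [zero_add, FormalMultilinearSeries.ofScalars_apply_eq, smul_eq_mul] at h
  rw [Real.rpow_neg (by linarith), ← one_div]
  have e : (fun n : ℕ => (ascPochhammer ℝ n).eval A / n.factorial * s ^ n) =
      fun n : ℕ => Ring.choose (A + n - 1) n * s ^ n := by
    funext n
    rw [← Ring.multichoose_eq]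
    have h2 := Ring.factorial_nsmul_multichoose_eq_ascPochhammer A n
    rw [ascPochhammer_smeval_eq_eval, nsmul_eq_mul] at h2
    rw [← h2]
    have : (n.factorial : ℝ) ≠ 0 := by positivity
    field_simp
  rw [e]
  exact h

lemma aux_kummer (v : ℕ → ℝ) (w : ℕ → ℝ) (d : ℝ) (hd : 0 < d) (hv : ∀ n, 0 ≤ v n)
    (hw : ∀ n, 0 ≤ w n) (h : ∀ n, d * v n ≤ w n - w (n+1)) : Summable v := by
  refine summable_of_sum_range_le (c := w 0 / d) hv fun n => ?_
  have : d * ∑ i ∈ Finset.range n, v i ≤ w 0 - w n := by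
    induction n with
    | zero => simp
    | succ n ih => rw [Finset.sum_range_succ, mul_add]; linarith [h n]
  rw [le_div_iff₀ hd]
  linarith [hw n]

lemma aux_succ (A B C : ℝ) (hC : 0 < C) (n : ℕ) :
    (n + 1) * hypTerm A B C 1 (n+1) = hypTerm A B C 1 n * ((A + n) * (B + n) / (C + n)) := by
  unfold hypTerm
  rw [ascPochhammer_succ_eval, ascPochhammer_succ_eval, ascPochhammer_succ_eval,
    Nat.factorial_succ]
  have := (aux_poch_pos hC n).ne'
  have : C + n ≠ 0 := by positivity
  have : (n.factorial : ℝ) ≠ 0 := by positivity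
  push_cast
  field_simp
  simp

lemma aux_summable_one (A B C : ℝ) (hB : 0 < B) (hC : 0 < C) (h : A + B < C) :
    Summable (fun n => ‖hypTerm A B C 1 n‖) := by
  set δ := C - A - B with hδ
  have hδ0 : 0 < δ := by linarith
  obtain ⟨N, hN⟩ := exists_nat_ge (max (-A) ((δ * C / 2 + A * B) / (δ / 2)))
  have hN1 := (le_max_left _ _).trans hN
  have hN2 := (le_max_right _ _).trans hN
  rw [div_le_iff₀ (by positivity)] at hN2
  rw [← summable_nat_add_iff N]
  refine aux_kummer _ (fun m => ((m + N : ℕ) : ℝ) * ‖hypTerm A B C 1 (m + N)‖) (δ / 2)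
    (by positivity) (fun _ => norm_nonneg _) (fun _ => by positivity) fun m => ?_
  have hk : (N : ℝ) ≤ ((m + N : ℕ) : ℝ) := by push_cast; linarith [m.cast_nonneg (α := ℝ)]
  rw [show m + 1 + N = (m + N) + 1 by ring]
  generalize m + N = k at hk ⊢
  have hk0 : (0:ℝ) ≤ k := k.cast_nonneg
  have e := congrArg norm (aux_succ A B C hC k)
  rw [norm_mul, norm_mul, Real.norm_of_nonneg (by positivity : (0:ℝ) ≤ k + 1),
    Real.norm_of_nonneg (div_nonneg (mul_nonneg (by linarith) (by positivity)) (by positivity) :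
      (0:ℝ) ≤ (A + k) * (B + k) / (C + k))] at e
  push_cast
  rw [e]
  have : δ / 2 ≤ k - (A + k) * (B + k) / (C + k) := by
    rw [le_sub_iff_add_le, ← le_sub_iff_add_le', div_le_iff₀ (by positivity)]
    have : (N:ℝ) * (δ / 2) ≤ k * (δ / 2) := by gcongr
    have hA : A = C - B - δ := by rw [hδ]; ring
    rw [hA] at *
    nlinarith
  have := mul_le_mul_of_nonneg_left this (norm_nonneg (hypTerm A B C 1 k))
  linarith

lemma aux_term (A B C z : ℝ) (n : ℕ) : hypTerm A B C z n = hypTerm A B C 1 n * z ^ n := by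
  unfold hypTerm; simp; ring

lemma aux_summable (A B C : ℝ) (hB : 0 < B) (hC : 0 < C) (h : A + B < C) {z : ℝ}
    (hz : z ∈ Icc (0:ℝ) 1) : Summable (fun n => ‖hypTerm A B C z n‖) := by
  refine (aux_summable_one A B C hB hC h).of_nonneg_of_le (fun _ => norm_nonneg _) fun n => ?_
  rw [aux_term, norm_mul, Real.norm_of_nonneg (pow_nonneg hz.1 n)]
  exact mul_le_of_le_one_right (norm_nonneg _) (pow_le_one₀ hz.1 hz.2)

lemma aux_zero (A B C : ℝ) : hyp2F1 A B C 0 = 1 := by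
  unfold hyp2F1
  rw [tsum_eq_single 0]
  · simp [hypTerm]
  · intro n hn
    simp [hypTerm, hn]

open MeasureTheory ProbabilityTheory in
lemma aux_euler (A B : ℝ) (hB : 0 < B) (h : A < B) {z : ℝ} (hz : z ∈ Icc (0:ℝ) 1) :
    hyp2F1 A B (B + B) z * beta B B =
      ∫ t in Ioo (0:ℝ) 1, (1 - z * t) ^ (-A) * (t ^ (B - 1) * (1 - t) ^ (B - 1)) := by
  have hs := aux_summable A B (B + B) hB (by positivity) (by linarith) hz
  set F : ℕ → ℝ → ℝ := fun n t => ((ascPochhammer ℝ n).eval A / n.factorial * z ^ n) *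
    (t ^ (B + n - 1) * (1 - t) ^ (B - 1)) with hF
  have hpos : ∀ n : ℕ, 0 < B + n := fun n => by positivity
  have hval : ∀ n, ∫ t in Ioo (0:ℝ) 1, F n t = hypTerm A B (B + B) z n * beta B B := by
    intro n
    simp only [hF]
    rw [integral_const_mul, (aux_beta (hpos n) hB).2, aux_beta_shift hB B hB]
    unfold hypTerm; ring
  have hvaln : ∀ n, ∫ t in Ioo (0:ℝ) 1, ‖F n t‖ = ‖hypTerm A B (B + B) z n‖ * beta B B := by
    intro n
    have : ∫ t in Ioo (0:ℝ) 1, ‖F n t‖ = ∫ t in Ioo (0:ℝ) 1,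
        ‖(ascPochhammer ℝ n).eval A / n.factorial * z ^ n‖ *
        (t ^ (B + n - 1) * (1 - t) ^ (B - 1)) := by
      refine setIntegral_congr_fun measurableSet_Ioo fun t ht => ?_
      have h2 := Real.rpow_pos_of_pos ht.1 (B+n-1)
      have h3 := Real.rpow_pos_of_pos (sub_pos.2 ht.2) (B-1)
      simp only [hF]
      rw [norm_mul _ (_ * _), Real.norm_of_nonneg (mul_pos h2 h3).le]
    rw [this, integral_const_mul, (aux_beta (hpos n) hB).2, aux_beta_shift hB B hB]
    have hq : 0 < (ascPochhammer ℝ n).eval B / (ascPochhammer ℝ n).eval (B + B) :=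
      div_pos (aux_poch_pos hB n) (aux_poch_pos (by positivity) n)
    have e : hypTerm A B (B + B) z n = ((ascPochhammer ℝ n).eval A / n.factorial * z ^ n) *
        ((ascPochhammer ℝ n).eval B / (ascPochhammer ℝ n).eval (B + B)) := by
      unfold hypTerm; ring
    rw [e, norm_mul _ (_ / eval _ _), Real.norm_of_nonneg hq.le]
    ring
  have key := hasSum_integral_of_summable_integral_norm (μ := volume.restrict (Ioo (0:ℝ) 1))
    (F := F) (fun n => (aux_beta (hpos n) hB).1.const_mul _)
    (by simp_rw [hvaln]; exact hs.mul_right _)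
  simp_rw [hval] at key
  have k2 := (hs.of_norm.hasSum.mul_right (beta B B)).unique key
  unfold hyp2F1
  rw [k2]
  refine setIntegral_congr_fun measurableSet_Ioo fun t ht => ?_
  have hzt : z * t < 1 := by nlinarith [hz.1, hz.2, ht.1, ht.2]
  have hb := (aux_binom A (z * t) (mul_nonneg hz.1 ht.1.le) hzt).mul_right
    (t ^ (B - 1) * (1 - t) ^ (B - 1))
  rw [← hb.tsum_eq]
  refine tsum_congr fun n => ?_
  simp only [hF]
  rw [show B + n - 1 = (B - 1) + n by ring, Real.rpow_add ht.1, Real.rpow_natCast, mul_pow]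
  ring

open MeasureTheory ProbabilityTheory in
lemma aux_int (A B : ℝ) (hB : 0 < B) (h : A ≤ 0) {z : ℝ} (hz : z ∈ Icc (0:ℝ) 1) :
    IntegrableOn (fun t : ℝ => (1 - z * t) ^ (-A) * (t ^ (B - 1) * (1 - t) ^ (B - 1)))
      (Ioo 0 1) := by
  refine (aux_beta hB hB).1.bdd_mul (c := 1) ?_ ?_
  · apply Measurable.aestronglyMeasurable; fun_prop
  · filter_upwards [ae_restrict_mem measurableSet_Ioo] with t ht
    have h0 : 0 ≤ z * t := mul_nonneg hz.1 ht.1.le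
    have hzt : 0 ≤ 1 - z * t := by nlinarith [hz.1, hz.2, ht.1, ht.2]
    rw [Real.norm_of_nonneg (Real.rpow_nonneg hzt _)]
    exact Real.rpow_le_one hzt (by linarith) (by linarith)

open MeasureTheory ProbabilityTheory in
lemma aux_anti (A B : ℝ) (hB : 0 < B) (h : A ≤ 0) :
    AntitoneOn (fun z => hyp2F1 A B (B + B) z) (Icc (0:ℝ) 1) := by
  intro x hx y hy hxy
  have hp := beta_pos hB hB
  refine le_of_mul_le_mul_right ?_ hp
  simp only []
  rw [aux_euler A B hB (by linarith) hx, aux_euler A B hB (by linarith) hy]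
  refine setIntegral_mono_on (aux_int A B hB h hy) (aux_int A B hB h hx) measurableSet_Ioo
    fun t ht => ?_
  have h2 := Real.rpow_pos_of_pos ht.1 (B-1)
  have h3 := Real.rpow_pos_of_pos (sub_pos.2 ht.2) (B-1)
  have hzt : 0 ≤ 1 - y * t := by nlinarith [hy.1, hy.2, ht.1, ht.2]
  refine mul_le_mul_of_nonneg_right (Real.rpow_le_rpow hzt ?_ (by linarith)) (mul_pos h2 h3).le
  nlinarith [ht.1]

open MeasureTheory ProbabilityTheory in
lemma aux_one_pos (A B : ℝ) (hB : 0 < B) (h : A ≤ 0) : 0 < hyp2F1 A B (B + B) 1 := by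
  have hp := beta_pos hB hB
  refine pos_of_mul_pos_left ?_ hp.le
  have h1 : (1:ℝ) ∈ Icc (0:ℝ) 1 := by simp
  rw [aux_euler A B hB (by linarith) h1]
  have e : ∫ t in Ioo (0:ℝ) 1, (1 - 1 * t) ^ (-A) * (t ^ (B - 1) * (1 - t) ^ (B - 1)) =
      ∫ t in Ioo (0:ℝ) 1, t ^ (B - 1) * (1 - t) ^ ((B - A) - 1) := by
    refine setIntegral_congr_fun measurableSet_Ioo fun t ht => ?_
    rw [show B - A - 1 = -A + (B - 1) by ring, Real.rpow_add (sub_pos.2 ht.2), one_mul]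
    ring
  rw [e, (aux_beta hB (by linarith : 0 < B - A)).2]
  exact beta_pos hB (by linarith)

lemma aux_mono (A B : ℝ) (hB : 0 < B) (h : 0 < A) (hAB : A < B) :
    MonotoneOn (fun z => hyp2F1 A B (B + B) z) (Icc (0:ℝ) 1) := by
  intro x hx y hy hxy
  have hs {z : ℝ} (hz : z ∈ Icc (0:ℝ) 1) :=
    (aux_summable A B (B + B) hB (by positivity) (by linarith) hz).of_norm
  refine (hs hx).tsum_le_tsum (fun n => ?_) (hs hy)
  rw [aux_term, aux_term A B _ y]
  have : 0 ≤ hypTerm A B (B + B) 1 n := by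
    have := aux_poch_pos h n
    have := aux_poch_pos hB n
    have := aux_poch_pos (show 0 < B + B by positivity) n
    unfold hypTerm
    positivity
  exact mul_le_mul_of_nonneg_left (pow_le_pow_left₀ hx.1 hxy n) this

/-- For κ ∈ (0,8) and ν ≤ max(−4, κ/2−6), the function
G(z) = ₂F₁((2ν+12−κ)/κ, 4/κ, 8/κ; z) is monotone and uniformly bounded on [0,1]:
0 < min(1, G(1)) ≤ G(z) ≤ max(1, G(1)) for all z ∈ [0,1]. -/
theorem hSLE_G_monotone_bounded (κ ν : ℝ) (hκ : κ ∈ Set.Ioo (0 : ℝ) 8)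
    (hν : ν ≤ max (-4) (κ / 2 - 6)) :
    (MonotoneOn (fun z => hyp2F1 ((2*ν+12-κ)/κ) (4/κ) (8/κ) z) (Set.Icc (0:ℝ) 1) ∨
      AntitoneOn (fun z => hyp2F1 ((2*ν+12-κ)/κ) (4/κ) (8/κ) z) (Set.Icc (0:ℝ) 1)) ∧
    (0 < min 1 (hyp2F1 ((2*ν+12-κ)/κ) (4/κ) (8/κ) 1)) ∧
    (∀ z ∈ Set.Icc (0:ℝ) 1,
      min 1 (hyp2F1 ((2*ν+12-κ)/κ) (4/κ) (8/κ) 1) ≤ hyp2F1 ((2*ν+12-κ)/κ) (4/κ) (8/κ) z ∧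
      hyp2F1 ((2*ν+12-κ)/κ) (4/κ) (8/κ) z ≤ max 1 (hyp2F1 ((2*ν+12-κ)/κ) (4/κ) (8/κ) 1)) := by
  have hk := hκ.1
  have hk8 := hκ.2
  have e : 8 / κ = 4 / κ + 4 / κ := by ring
  rw [e]
  have hB : 0 < 4 / κ := by positivity
  generalize hA : (2*ν+12-κ)/κ = A
  have hA' : A ≤ 0 ∨ A < 4 / κ := by
    rw [← hA]
    rcases le_max_iff.1 hν with h | h
    · right
      exact div_lt_div_of_pos_right (by linarith) hk
    · left
      exact div_nonpos_of_nonpos_of_nonneg (by linarith) hk.le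
  generalize 4 / κ = B at *
  have h0 : (0:ℝ) ∈ Icc (0:ℝ) 1 := by simp
  have h1 : (1:ℝ) ∈ Icc (0:ℝ) 1 := by simp
  have z0 := aux_zero A B (B + B)
  rcases le_or_gt A 0 with h | h
  · have ha := aux_anti A B hB h
    refine ⟨Or.inr ha, lt_min one_pos (aux_one_pos A B hB h), fun z hz => ⟨?_, ?_⟩⟩
    · exact (min_le_right _ _).trans (ha hz h1 hz.2)
    · refine le_trans ?_ (le_max_left _ _)
      have := ha h0 hz hz.1
      simpa only [z0] using this
  · have ha := aux_mono A B hB h (by rcases hA' with h' | h' <;> linarith)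
    have hge : ∀ z ∈ Icc (0:ℝ) 1, 1 ≤ hyp2F1 A B (B + B) z := fun z hz => by
      have := ha h0 hz hz.1
      simpa only [z0] using this
    refine ⟨Or.inl ha, lt_min one_pos (one_pos.trans_le (hge 1 h1)), fun z hz => ⟨?_, ?_⟩⟩
    · exact (min_le_left _ _).trans (hge z hz)
    · exact (ha hz h1 hz.2).trans (le_max_right _ _)
end
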